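/- arXiv:1510.00974 — 4 statements merged into one kernel-verified Lean document; each statement's English description precedes it below -/
import Mathlib

section
/- Let A be a C*-algebra, let a, b ∈ A be positive elements, and let ε > 0 be such that ‖a − b‖ < ε. Then (a − ε)₊ ≼ b; explicitly, there exist an element x₁ ∈ A with 0 ≤ x₁ ≤ b and a finite family z₁, …, z_n ∈ A such that (a − ε)₊ = Σᵢ zᵢ*zᵢ and x₁ = Σᵢ zᵢzᵢ*. (In fact a single element z ∈ A with (a − ε)₊ = z z* and z*z ≤ b suffices.) -/
open scoped ENNReal NNReal

/-!
Put `δ = ‖a - b‖`. Choosing `e = f(a)` with `0 ≤ f ≤ 1` and `f(t)² (t - δ) = max (t - ε) 0` gives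
`(a - ε)₊ = e (a - δ) e ≤ e b e`. With `s = (a - ε)₊^{1/2}` and `y = b^{1/2} e` this reads
`s s* ≤ y* y`, and `y y* ≤ b` because `e` is a contraction. It remains to find `z` with
`z* z = s* s` and `z z* ≤ y y*`. If `y = v q` is the polar decomposition, with `q = (y* y)^{1/2}`,
then `z = v s` works; although `v` need not belong to the algebra, `v s` is the norm limit of
`y g s`, where `g` runs over the regularized inverses `q (q² + η²)⁻¹` of `q`.
-/

open Filter Topology

lemma star_mul_self_mul_congr {A : Type*} [Semigroup A] [StarMul A] {x y : A}
    (h : star x * x = star y * y) (w : A) : star (x * w) * (x * w) = star (y * w) * (y * w) := by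
  calc star (x * w) * (x * w) = star w * (star x * x) * w := by simp only [star_mul, mul_assoc]
    _ = star w * (star y * y) * w := by rw [h]
    _ = star (y * w) * (y * w) := by simp only [star_mul, mul_assoc]

lemma norm_mul_eq_of_star_mul_self_eq {A : Type*} [NonUnitalNormedRing A] [StarRing A]
    [CStarRing A] {x y : A} (h : star x * x = star y * y) (w : A) : ‖x * w‖ = ‖y * w‖ := by
  rw [← mul_self_inj (norm_nonneg _) (norm_nonneg _), ← CStarRing.norm_star_mul_self,
    ← CStarRing.norm_star_mul_self, star_mul_self_mul_congr h]

lemma mul_mul_star_self_mono {A : Type*} [NonUnitalSemiring A] [PartialOrder A] [StarRing A]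
    [StarOrderedRing A] {s q : A} (h : s * star s ≤ q * star q) (x : A) :
    x * s * star (x * s) ≤ x * q * star (x * q) := by
  simpa only [star_mul, mul_assoc] using star_right_conjugate_le_conjugate h x

section RegularizedInverse

lemma abs_div_sq_add_sq_mul_self_le_one (η t : ℝ) : |t / (t ^ 2 + η ^ 2) * t| ≤ 1 := by
  rw [div_mul_eq_mul_div, ← sq, abs_of_nonneg (by positivity)]
  exact div_le_one_of_le₀ (by linarith [sq_nonneg η]) (by positivity)

lemma abs_sub_mul_div_sq_add_sq_mul_le {η : ℝ} (hη : 0 < η) (t : ℝ) :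
    |t - t * (t / (t ^ 2 + η ^ 2)) * t| ≤ η := by
  have hden : 0 < t ^ 2 + η ^ 2 := by positivity
  have hdiff : t - t * (t / (t ^ 2 + η ^ 2)) * t = t * η ^ 2 / (t ^ 2 + η ^ 2) := by
    field_simp
    ring
  have ham_gm : |t| * η ≤ t ^ 2 + η ^ 2 := by
    nlinarith [sq_nonneg (|t| - η), sq_abs t, sq_nonneg t, sq_nonneg η]
  rw [hdiff, abs_div, abs_of_pos hden, div_le_iff₀ hden, abs_mul, abs_of_pos (pow_pos hη 2)]
  linear_combination η * ham_gm

variable {A : Type*} [NonUnitalCStarAlgebra A]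

/-- The Tikhonov regularization `q (q² + η²)⁻¹` of the inverse of a self-adjoint element `q`. It is
formed by the functional calculus, so no unit is needed; at `η = 0` it is a junk value. -/
noncomputable def regularizedInverse (q : A) (η : ℝ) : A :=
  cfcₙ (fun t : ℝ => t / (t ^ 2 + η ^ 2)) q

lemma continuous_div_sq_add_sq {η : ℝ} (hη : η ≠ 0) :
    Continuous fun t : ℝ => t / (t ^ 2 + η ^ 2) :=
  continuous_id.div (by fun_prop) fun t => by positivity

lemma norm_regularizedInverse_mul_self_le_one {q : A} (hq : IsSelfAdjoint q) {η : ℝ}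
    (hη : η ≠ 0) : ‖regularizedInverse q η * q‖ ≤ 1 := by
  have hf := (continuous_div_sq_add_sq hη).continuousOn (s := quasispectrum ℝ q)
  have hcfc : regularizedInverse q η * q = cfcₙ (fun t => t / (t ^ 2 + η ^ 2) * t) q := by
    rw [cfcₙ_mul _ (fun t => t) q hf, cfcₙ_id' ℝ q, regularizedInverse]
  rw [hcfc]
  exact norm_cfcₙ_le fun t _ => abs_div_sq_add_sq_mul_self_le_one η t

lemma norm_sub_mul_regularizedInverse_mul_le {q : A} (hq : IsSelfAdjoint q) {η : ℝ}
    (hη : 0 < η) : ‖q - q * regularizedInverse q η * q‖ ≤ η := by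
  have hf := (continuous_div_sq_add_sq hη.ne').continuousOn (s := quasispectrum ℝ q)
  have hcfc : q - q * regularizedInverse q η * q =
      cfcₙ (fun t => t - t * (t / (t ^ 2 + η ^ 2)) * t) q := by
    rw [cfcₙ_sub (fun t => t) (fun t => t * (t / (t ^ 2 + η ^ 2)) * t) q
        (hg := (continuousOn_id.mul hf).mul continuousOn_id),
      cfcₙ_mul (fun t => t * (t / (t ^ 2 + η ^ 2))) (fun t => t) q (continuousOn_id.mul hf),
      cfcₙ_mul (fun t => t) _ q (hg := hf), cfcₙ_id' ℝ q, regularizedInverse]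
  rw [hcfc]
  exact norm_cfcₙ_le fun t _ => abs_sub_mul_div_sq_add_sq_mul_le hη t

lemma tendsto_mul_regularizedInverse_mul {q : A} (hq : IsSelfAdjoint q) :
    Tendsto (fun η => q * regularizedInverse q η * q) (𝓝[>] 0) (𝓝 q) := by
  refine tendsto_iff_norm_sub_tendsto_zero.mpr <|
    squeeze_zero' (.of_forall fun _ => norm_nonneg _) ?_ nhdsWithin_le_nhds
  filter_upwards [self_mem_nhdsWithin] with η hη
  exact norm_sub_rev q _ ▸ norm_sub_mul_regularizedInverse_mul_le hq hη

end RegularizedInverse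

section Order

variable {A : Type*} [NonUnitalCStarAlgebra A] [PartialOrder A] [StarOrderedRing A]

lemma norm_le_norm_of_mul_star_self_le {s q : A} (h : s * star s ≤ q * star q) : ‖s‖ ≤ ‖q‖ := by
  rw [mul_self_le_mul_self_iff (norm_nonneg _) (norm_nonneg _), ← CStarRing.norm_self_mul_star,
    ← CStarRing.norm_self_mul_star]
  exact CStarAlgebra.norm_le_norm_of_nonneg_of_le (mul_star_self_nonneg s) h

lemma norm_mul_le_norm_mul_of_mul_star_self_le {s q : A} (h : s * star s ≤ q * star q) (x : A) :
    ‖x * s‖ ≤ ‖x * q‖ :=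
  norm_le_norm_of_mul_star_self_le (mul_mul_star_self_mono h x)

lemma norm_sub_mul_le_norm_sub_mul_of_mul_star_self_le {s q : A} (h : s * star s ≤ q * star q)
    (x : A) : ‖s - x * s‖ ≤ ‖q - x * q‖ := by
  refine norm_le_norm_of_mul_star_self_le (sub_nonneg.mp ?_)
  obtain ⟨w, hw⟩ := CStarAlgebra.nonneg_iff_eq_star_mul_self.mp (sub_nonneg.mpr h)
  have hdiff : (q - x * q) * star (q - x * q) - (s - x * s) * star (s - x * s) =
      star (w - w * star x) * (w - w * star x) := by
    calc _ = (q * star q - s * star s) - x * (q * star q - s * star s)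
          - (q * star q - s * star s) * star x
          + x * (q * star q - s * star s) * star x := by
            simp only [star_sub, star_mul]
            noncomm_ring
      _ = _ := by
            simp only [hw, star_sub, star_mul, star_star]
            noncomm_ring
  exact hdiff ▸ star_mul_self_nonneg _

lemma mul_mul_star_self_le_of_norm_le_one (y : A) {e : A} (he : ‖e‖ ≤ 1) :
    y * e * star (y * e) ≤ y * star y := by
  have hee : ‖e * star e‖ ≤ 1 := by
    rw [CStarRing.norm_self_mul_star]
    exact mul_le_one₀ he (norm_nonneg e) he
  calc y * e * star (y * e) = y * (e * star e) * star y := by simp only [star_mul, mul_assoc]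
    _ ≤ ‖e * star e‖ • (y * star y) :=
        CStarAlgebra.star_right_conjugate_le_norm_smul (.mul_star_self e)
    _ ≤ y * star y := smul_le_of_le_one_left (mul_star_self_nonneg y) hee

lemma tendsto_mul_of_mul_star_self_le {ι : Type*} {l : Filter ι} {x : ι → A} {s q : A}
    (h : s * star s ≤ q * star q) (hx : Tendsto (fun i => x i * q) l (𝓝 q)) :
    Tendsto (fun i => x i * s) l (𝓝 s) := by
  rw [tendsto_iff_norm_sub_tendsto_zero] at hx ⊢
  refine squeeze_zero (fun _ => norm_nonneg _) (fun i => ?_) hx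
  simpa only [norm_sub_rev] using norm_sub_mul_le_norm_sub_mul_of_mul_star_self_le h (x i)

lemma exists_tendsto_mul_mul_of_mul_star_self_le {ι : Type*} {l : Filter ι} [l.NeBot] {g : ι → A}
    {s q y q' : A} (hsq : s * star s ≤ q * star q) (hyq : star y * y = star q * q)
    (hg : Tendsto (fun i => q * g i * q) l (𝓝 q')) :
    ∃ z, Tendsto (fun i => y * g i * s) l (𝓝 z) := by
  have hdist (i j : ι) : dist (y * g i * s) (y * g j * s) ≤ dist (q * g i * q) (q * g j * q) := by
    simp only [dist_eq_norm, ← sub_mul, ← mul_sub]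
    calc ‖y * (g i - g j) * s‖ ≤ ‖y * (g i - g j) * q‖ :=
          norm_mul_le_norm_mul_of_mul_star_self_le hsq _
      _ = ‖q * (g i - g j) * q‖ := by
          rw [mul_assoc, mul_assoc, norm_mul_eq_of_star_mul_self_eq hyq]
  have hcauchy : Cauchy (map (fun i => y * g i * s) l) := by
    have hq := (cauchy_map_iff.mp hg.cauchy_map).2
    rw [tendsto_uniformity_iff_dist_tendsto_zero] at hq
    refine cauchy_map_iff.mpr ⟨‹_›, tendsto_uniformity_iff_dist_tendsto_zero.mpr ?_⟩
    exact squeeze_zero (fun _ => dist_nonneg) (fun p => hdist p.1 p.2) hq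
  exact CompleteSpace.complete hcauchy

lemma exists_star_mul_self_eq_of_mul_star_self_le {s y : A} (h : s * star s ≤ star y * y) :
    ∃ z : A, star z * z = star s * s ∧ z * star z ≤ y * star y := by
  let q := CFC.abs y
  have hq : IsSelfAdjoint q := .of_nonneg (CFC.abs_nonneg y)
  have hyq : star y * y = star q * q := by rw [hq.star_eq, CFC.abs_mul_abs]
  have hsq : s * star s ≤ q * star q := by rwa [hq.star_eq, CFC.abs_mul_abs]
  let g := regularizedInverse q
  have hqgq : Tendsto (fun η => q * g η * q) (𝓝[>] 0) (𝓝 q) :=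
    tendsto_mul_regularizedInverse_mul hq
  obtain ⟨z, hz⟩ := exists_tendsto_mul_mul_of_mul_star_self_le hsq hyq hqgq
  refine ⟨z, ?_, ?_⟩
  · have hqgs : Tendsto (fun η => q * g η * s) (𝓝[>] 0) (𝓝 s) :=
      tendsto_mul_of_mul_star_self_le hsq hqgq
    refine tendsto_nhds_unique (hz.star.mul hz) ((hqgs.star.mul hqgs).congr fun η => ?_)
    simpa only [mul_assoc] using (star_mul_self_mul_congr hyq (g η * s)).symm
  · refine le_of_tendsto (hz.mul hz.star) ?_
    filter_upwards [self_mem_nhdsWithin] with η hη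
    calc y * g η * s * star (y * g η * s) ≤ y * g η * q * star (y * g η * q) :=
          mul_mul_star_self_mono hsq _
      _ = y * (g η * q) * star (y * (g η * q)) := by rw [mul_assoc y]
      _ ≤ y * star y :=
          mul_mul_star_self_le_of_norm_le_one y <|
            norm_regularizedInverse_mul_self_le_one hq (ne_of_gt hη)

lemma exists_continuous_mul_sub_mul_eq_max {δ ε : ℝ} (hε : 0 ≤ ε) (hδε : δ < ε) :
    ∃ f : ℝ → ℝ, Continuous f ∧ f 0 = 0 ∧ (∀ t, |f t| ≤ 1) ∧
      ∀ t, f t * (t - δ) * f t = max (t - ε) 0 := by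
  have hden (t : ℝ) : 0 < max (t - δ) (ε - δ) := lt_max_of_lt_right (sub_pos.mpr hδε)
  refine ⟨fun t => √(max (t - ε) 0 / max (t - δ) (ε - δ)), ?_, ?_, fun t => ?_, fun t => ?_⟩
  · exact (Continuous.div (by fun_prop) (by fun_prop) fun t => (hden t).ne').sqrt
  · simp [hε]
  · rw [abs_of_nonneg (Real.sqrt_nonneg _), Real.sqrt_le_one]
    exact div_le_one_of_le₀ (max_le_max (by linarith) (by linarith)) (hden t).le
  · rw [mul_right_comm, Real.mul_self_sqrt (div_nonneg (le_max_right _ _) (hden t).le)]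
    rcases le_total t ε with ht | ht
    · simp [ht]
    · rw [max_eq_left (b := ε - δ) (by linarith)]
      exact div_mul_cancel₀ _ (by linarith)

lemma exists_cutdown_le_conjugate {a b : A} (ha : IsSelfAdjoint a) (hb : IsSelfAdjoint b) {ε : ℝ}
    (hab : ‖a - b‖ < ε) : ∃ e : A, IsSelfAdjoint e ∧ ‖e‖ ≤ 1 ∧
      cfcₙ (fun t : ℝ => max (t - ε) 0) a ≤ e * b * e := by
  obtain ⟨f, hf, hf0, hf1, hfε⟩ :=
    exists_continuous_mul_sub_mul_eq_max ((norm_nonneg _).trans hab.le) hab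
  let e := cfcₙ f a
  have he : IsSelfAdjoint e := cfcₙ_predicate f a
  have hcut : cfcₙ (fun t : ℝ => max (t - ε) 0) a = e * a * e - ‖a - b‖ • (e * e) := by
    have hexpand (t : ℝ) : max (t - ε) 0 = f t * t * f t - ‖a - b‖ * (f t * f t) := by
      rw [← hfε]
      ring
    rw [funext hexpand,
      cfcₙ_sub (fun t => f t * t * f t) (fun t => ‖a - b‖ * (f t * f t)) a,
      cfcₙ_const_mul ‖a - b‖ (fun t => f t * f t) a, cfcₙ_mul (fun t => f t * t) f a,
      cfcₙ_mul f (fun t => t) a, cfcₙ_mul f f a, cfcₙ_id' ℝ a]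
  have hconj : e * (a - b) * e ≤ ‖a - b‖ • (e * e) := by
    simpa only [he.star_eq] using
      CStarAlgebra.star_left_conjugate_le_norm_smul (a := e) (ha.sub hb)
  refine ⟨e, he, norm_cfcₙ_le fun t _ => hf1 t, ?_⟩
  rw [hcut, sub_le_comm, ← sub_mul, ← mul_sub]
  exact hconj

theorem cutdown_subequivalent_general {a b : A} (ha : IsSelfAdjoint a) (hb : 0 ≤ b) {ε : ℝ}
    (hab : ‖a - b‖ < ε) : ∃ z : A,
      cfcₙ (fun t : ℝ => max (t - ε) 0) a = star z * z ∧ z * star z ≤ b := by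
  obtain ⟨e, he, he_contr, hle⟩ := exists_cutdown_le_conjugate ha (.of_nonneg hb) hab
  have hsqrt {c : A} (hc : 0 ≤ c) :
      star (CFC.sqrt c) = CFC.sqrt c ∧ CFC.sqrt c * CFC.sqrt c = c :=
    ⟨(IsSelfAdjoint.of_nonneg (CFC.sqrt_nonneg c)).star_eq, CFC.sqrt_mul_sqrt_self c hc⟩
  have hc : 0 ≤ cfcₙ (fun t : ℝ => max (t - ε) 0) a := cfcₙ_nonneg fun t _ => le_max_right _ _
  obtain ⟨hsc, hcc⟩ := hsqrt hc
  obtain ⟨hsb, hbb⟩ := hsqrt hb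
  have hy : star (CFC.sqrt b * e) * (CFC.sqrt b * e) = e * b * e := by
    rw [star_mul, he.star_eq, hsb, ← mul_assoc, mul_assoc e, hbb]
  obtain ⟨z, hz, hzy⟩ := exists_star_mul_self_eq_of_mul_star_self_le
    (s := CFC.sqrt (cfcₙ (fun t : ℝ => max (t - ε) 0) a)) (y := CFC.sqrt b * e)
    (by rwa [hsc, hcc, hy])
  refine ⟨z, by rw [hz, hsc, hcc], hzy.trans ?_⟩
  simpa only [hsb, hbb] using mul_mul_star_self_le_of_norm_le_one (CFC.sqrt b) he_contr

end Order

/-- `(a - ε)₊ ≼ b`: there exist `x₁` with `0 ≤ x₁ ≤ b` and a finite family `z i` with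
`(a - ε)₊ = ∑ star (z i) * z i` and `x₁ = ∑ z i * star (z i)`, where `(a - ε)₊` is obtained
by applying the continuous functional calculus with `t ↦ max (t - ε) 0` to `a`. -/
theorem cutdown_subequivalent {A : Type*} [NonUnitalCStarAlgebra A] [PartialOrder A]
    [StarOrderedRing A] (a b : A) (ha : 0 ≤ a) (hb : 0 ≤ b) (ε : ℝ) (hε : 0 < ε)
    (hab : ‖a - b‖ < ε) :
    ∃ x₁ : A, 0 ≤ x₁ ∧ x₁ ≤ b ∧ ∃ (n : ℕ) (z : Fin n → A),
      cfcₙ (fun t : ℝ => max (t - ε) 0) a = ∑ i, star (z i) * z i ∧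
      x₁ = ∑ i, z i * star (z i) := by
  obtain ⟨z, hz, hzb⟩ := cutdown_subequivalent_general (.of_nonneg ha) hb hab
  exact ⟨z * star z, mul_star_self_nonneg z, hzb, 1, fun _ => z, by simp [hz], by simp⟩
end

section
/- Let A be a C*-algebra and let φ be a lower semicontinuous trace on A. Set A₊^φ = {x ∈ A₊ : φ(x) < ∞} and let A^φ denote the linear span of A₊^φ. If p is a projection belonging to the closure of A^φ in A, then φ(p) < ∞. -/
open scoped ENNReal NNReal

/-- A `[0,∞]`-valued trace on a C*-algebra: positively homogeneous and additive on the
positive cone, and satisfying `φ (x* x) = φ (x x*)` for all `x`. -/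
structure IsTrace {A : Type*} [NonUnitalCStarAlgebra A] [PartialOrder A] [StarOrderedRing A]
    (φ : A → ℝ≥0∞) : Prop where
  smul : ∀ x : A, 0 ≤ x → ∀ α : ℝ≥0, φ ((α : ℝ) • x) = (α : ℝ≥0∞) * φ x
  add : ∀ x y : A, 0 ≤ x → 0 ≤ y → φ (x + y) = φ x + φ y
  tracial : ∀ x : A, φ (star x * x) = φ (x * star x)

/-- A trace is lower semicontinuous if for each finite `α`, the set of positive elements
with `φ x ≤ α` is closed. -/
def IsLSC {A : Type*} [NonUnitalCStarAlgebra A] [PartialOrder A] [StarOrderedRing A]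
    (φ : A → ℝ≥0∞) : Prop :=
  ∀ α : ℝ≥0, IsClosed {x : A | 0 ≤ x ∧ φ x ≤ (α : ℝ≥0∞)}

/-!
If `y` lies in the span of the positive elements of finite trace, then its real part satisfies
`ℜ y ≤ a` for some positive `a` of finite trace. Compressing `ℜ (p - y) ≤ ‖p - y‖` by the
projection `p` gives `(1 - ‖p - y‖) p ≤ p (ℜ y) p ≤ p a p`. Since `φ (p a p) < ∞` by traciality,
`φ p` is finite as soon as `‖p - y‖ < 1`.
-/

open scoped ComplexStarModule

theorem exists_mem_realPart_le_of_mem_span {E : Type*} [AddCommGroup E] [PartialOrder E]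
    [IsOrderedAddMonoid E] [StarAddMonoid E] [Module ℂ E] [StarModule ℂ E] [SMulPosMono ℝ E]
    {C : PointedCone ℝ E} (hpos : ∀ x ∈ C, 0 ≤ x) (hsa : ∀ x ∈ C, IsSelfAdjoint x) {y : E}
    (hy : y ∈ Submodule.span ℂ (C : Set E)) : ∃ a ∈ C, (ℜ y : E) ≤ a := by
  induction hy using Submodule.closure_induction with
  | zero => exact ⟨0, C.zero_mem, by simp⟩
  | add y z _ _ hy hz =>
    obtain ⟨a, ha, hya⟩ := hy
    obtain ⟨b, hb, hzb⟩ := hz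
    exact ⟨a + b, C.add_mem ha hb, by simpa using add_le_add hya hzb⟩
  | smul_mem c x hx =>
    have hre : (ℜ (c • x) : E) = c.re • x := by
      simp [realPart_smul, (hsa x hx).coe_realPart, (hsa x hx).imaginaryPart]
    refine ⟨‖c‖ • x, C.smul_mem (norm_nonneg c) hx, hre.trans_le ?_⟩
    exact smul_le_smul_of_nonneg_right (Complex.re_le_norm c) (hpos x hx)

section CStarAlgebra

variable {A : Type*} [NonUnitalCStarAlgebra A] [PartialOrder A] [StarOrderedRing A]

theorem one_sub_norm_sub_smul_le_conjugate_realPart {p : A} (hp : IsStarProjection p) (y : A) :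
    (1 - ‖p - y‖) • p ≤ p * ℜ y * p := by
  have hpp : p * p = p := hp.isIdempotentElem
  have hcompress : p * ℜ (p - y) * p = p - p * ℜ y * p := by
    simp only [map_sub, AddSubgroupClass.coe_sub, hp.isSelfAdjoint.coe_realPart, mul_sub, sub_mul,
      hpp]
  have hnorm : ‖(ℜ (p - y) : A)‖ ≤ ‖p - y‖ := realPart.norm_le (p - y)
  have hle : p - p * ℜ y * p ≤ ‖p - y‖ • p := calc
    p - p * ℜ y * p = star p * ℜ (p - y) * p := by rw [hp.isSelfAdjoint.star_eq, hcompress]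
    _ ≤ ‖(ℜ (p - y) : A)‖ • (star p * p) :=
      CStarAlgebra.star_left_conjugate_le_norm_smul (hb := (ℜ (p - y)).2)
    _ = ‖(ℜ (p - y) : A)‖ • p := by rw [hp.isSelfAdjoint.star_eq, hpp]
    _ ≤ ‖p - y‖ • p := smul_le_smul_of_nonneg_right hnorm hp.nonneg
  rwa [sub_smul, one_smul, sub_le_comm]

namespace IsTrace

variable {φ : A → ℝ≥0∞}

protected theorem map_zero (hφ : IsTrace φ) : φ 0 = 0 := by
  simpa using hφ.smul 0 le_rfl 0

protected theorem mono (hφ : IsTrace φ) {x y : A} (hx : 0 ≤ x) (hxy : x ≤ y) : φ x ≤ φ y := calc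
  φ x ≤ φ x + φ (y - x) := le_self_add
  _ = φ y := by rw [← hφ.add x (y - x) hx (sub_nonneg.2 hxy), add_sub_cancel]

theorem star_left_conjugate_le (hφ : IsTrace φ) {a : A} (ha : 0 ≤ a) (b : A) :
    φ (star b * a * b) ≤ ‖b‖ₑ ^ 2 * φ a := by
  obtain ⟨s, rfl⟩ := CStarAlgebra.nonneg_iff_eq_star_mul_self.1 ha
  have hle : s * (b * star b) * star s ≤ ‖b * star b‖ • (s * star s) :=
    CStarAlgebra.star_right_conjugate_le_norm_smul
  calc
    φ (star b * (star s * s) * b) = φ (star (s * b) * (s * b)) := by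
      simp only [star_mul, mul_assoc]
    _ = φ (s * (b * star b) * star s) := by
      rw [hφ.tracial, star_mul]
      simp only [mul_assoc]
    _ ≤ φ (‖b * star b‖ • (s * star s)) :=
      hφ.mono (star_right_conjugate_nonneg (mul_star_self_nonneg b) s) hle
    _ = ‖b * star b‖ₑ * φ (s * star s) := by
      rw [enorm_eq_nnnorm, ← hφ.smul _ (mul_star_self_nonneg s), coe_nnnorm]
    _ = ‖b‖ₑ ^ 2 * φ (star s * s) := by
      rw [hφ.tracial, enorm_eq_nnnorm, CStarRing.nnnorm_self_mul_star, ENNReal.coe_mul, ← sq,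
        enorm_eq_nnnorm]

/-- The convex cone `A₊^φ` of positive elements of finite trace. -/
def finiteCone (hφ : IsTrace φ) : PointedCone ℝ A where
  carrier := {x | 0 ≤ x ∧ φ x < ∞}
  zero_mem' := ⟨le_rfl, hφ.map_zero.trans_lt ENNReal.zero_lt_top⟩
  add_mem' := fun {x y} ⟨hx, hφx⟩ ⟨hy, hφy⟩ ↦
    ⟨add_nonneg hx hy, hφ.add x y hx hy ▸ ENNReal.add_lt_top.2 ⟨hφx, hφy⟩⟩
  smul_mem' := fun r x ⟨hx, hφx⟩ ↦
    ⟨smul_nonneg r.2 hx, (hφ.smul x hx r).trans_lt (ENNReal.mul_lt_top ENNReal.coe_lt_top hφx)⟩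

theorem mem_finiteCone_of_le (hφ : IsTrace φ) {x y : A} (hx : 0 ≤ x) (hxy : x ≤ y)
    (hy : y ∈ hφ.finiteCone) : x ∈ hφ.finiteCone :=
  ⟨hx, (hφ.mono hx hxy).trans_lt hy.2⟩

theorem star_left_conjugate_mem_finiteCone (hφ : IsTrace φ) {a : A} (ha : a ∈ hφ.finiteCone)
    (b : A) : star b * a * b ∈ hφ.finiteCone :=
  ⟨star_left_conjugate_nonneg ha.1 b,
    (hφ.star_left_conjugate_le ha.1 b).trans_lt
      (ENNReal.mul_lt_top (ENNReal.pow_lt_top enorm_lt_top) ha.2)⟩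

end IsTrace

theorem trace_finite_of_projection_mem_closure_span_general {φ : A → ℝ≥0∞} (hφ : IsTrace φ)
    {p y : A} (hp : IsStarProjection p) (hy : y ∈ Submodule.span ℂ {x : A | 0 ≤ x ∧ φ x < ∞})
    (hpy : ‖p - y‖ < 1) : φ p < ∞ := by
  have hpos : 0 < 1 - ‖p - y‖ := sub_pos.2 hpy
  obtain ⟨a, ha, hya⟩ := exists_mem_realPart_le_of_mem_span (C := hφ.finiteCone)
    (fun _ hx ↦ hx.1) (fun _ hx ↦ .of_nonneg hx.1) hy
  have hle : (1 - ‖p - y‖) • p ≤ p * a * p :=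
    (one_sub_norm_sub_smul_le_conjugate_realPart hp y).trans
      (hp.isSelfAdjoint.conjugate_le_conjugate hya)
  have hpap : p * a * p ∈ hφ.finiteCone := by
    simpa only [hp.isSelfAdjoint.star_eq] using hφ.star_left_conjugate_mem_finiteCone ha p
  have hsmul : (1 - ‖p - y‖) • p ∈ hφ.finiteCone :=
    hφ.mem_finiteCone_of_le (smul_nonneg hpos.le hp.nonneg) hle hpap
  exact ((hφ.finiteCone.smul_mem_iff hpos).1 hsmul).2

end CStarAlgebra

/-- If `φ` is a lower semicontinuous trace on a C*-algebra `A` and `p` is a projection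
belonging to the closure of the linear span of `A₊^φ = {x ∈ A₊ : φ x < ∞}`, then
`φ p < ∞`. -/
theorem trace_finite_of_projection_mem_closure_span {A : Type*} [NonUnitalCStarAlgebra A]
    [PartialOrder A] [StarOrderedRing A] (φ : A → ℝ≥0∞) (hφ : IsTrace φ) (hlsc : IsLSC φ)
    (p : A) (hp₁ : IsSelfAdjoint p) (hp₂ : p * p = p)
    (hp : p ∈ closure (Submodule.span ℂ {x : A | 0 ≤ x ∧ φ x < ∞} : Set A)) :
    φ p < ∞ := by
  obtain ⟨_, hy, hpy⟩ := Metric.mem_closure_iff.1 hp 1 one_pos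
  exact trace_finite_of_projection_mem_closure_span_general hφ ⟨hp₂, hp₁⟩ hy
    (dist_eq_norm p _ ▸ hpy)
end

section
/- Let φ and φ' be two lower semicontinuous traces on a C*-algebra A and let e be a projection in A. Suppose that both φ and φ' take finite values on (eAe)₊ and that φ(x) = φ'(x) for all x ∈ (eAe)₊. Then φ(x) = φ'(x) for all x ∈ (AeA)₊, where AeA denotes the closed two-sided ideal of A generated by e. -/
open scoped ENNReal NNReal

/-!
Let `C` be the convex cone generated by the elements `b* s* s b`, where `s` runs over a generating
set of the ideal. Since `φ (b* s* s b) = φ (s b b* s*)`, a comparison of two traces on the corners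
`s A s*` gives the same comparison on `C`. For `a, b ∈ A` and `δ > 0`,
`a s b + (a s b)* ≤ δ a a* + δ⁻¹ b* s* s b`, so every positive `x` in the closed ideal satisfies
`x ≤ p + ε` in the unitization, with `p ∈ C` and `ε > 0` arbitrarily small. Then
`x = d (p + ε) d*` for the contraction `d = x^(1/2) (p + ε)^(-1/2) ∈ A`, which exhibits `x` as a
limit of elements `d p d* ≤ x` of `C`. Lower semicontinuity of one trace and monotonicity of the
other carry the comparison from `C` over to `x`.
-/

open Filter Topology
open scoped CStarAlgebra

lemma mem_closure_range_mul_mul {α : Type*} [TopologicalSpace α] [Mul α] {l : Filter α}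
    (hl : l.IsApproximateUnit) (x : α) :
    x ∈ closure (Set.range fun u : α × α ↦ u.1 * x * u.2) := by
  have := hl.neBot
  refine closure_minimal ?_ isClosed_closure
    (mem_closure_of_tendsto (hl.tendsto_mul_right x) (.of_forall Set.mem_range_self))
  rintro _ ⟨a, rfl⟩
  exact mem_closure_of_tendsto (hl.tendsto_mul_left (a * x)) (.of_forall fun b ↦ ⟨(a, b), rfl⟩)

/-- The lower closure of a convex cone, bundled as a convex cone so that its topological closure
is one too. -/
def lowerCone {E : Type*} [AddCommMonoid E] [PartialOrder E] [IsOrderedAddMonoid E]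
    [Module ℝ≥0 E] [PosSMulMono ℝ≥0 E] (C : Submodule ℝ≥0 E) : Submodule ℝ≥0 E where
  carrier := lowerClosure (C : Set E)
  zero_mem' := subset_lowerClosure C.zero_mem
  add_mem' := fun ⟨p, hp, hxp⟩ ⟨q, hq, hyq⟩ ↦ ⟨p + q, C.add_mem hp hq, add_le_add hxp hyq⟩
  smul_mem' := fun c _ ⟨p, hp, hxp⟩ ↦
    ⟨c • p, C.smul_mem c hp, smul_le_smul_of_nonneg_left hxp c.2⟩

lemma mul_add_star_mul_le {R : Type*} [NonUnitalRing R] [StarRing R] [PartialOrder R]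
    [StarOrderedRing R] [Module ℝ R] [IsScalarTower ℝ R R] [SMulCommClass ℝ R R] [StarModule ℝ R]
    [PosSMulMono ℝ R] (u v : R) {δ : ℝ} (hδ : 0 < δ) :
    u * v + star (u * v) ≤ δ • (u * star u) + δ⁻¹ • (star v * v) := by
  rw [← sub_nonneg]
  convert smul_nonneg (inv_nonneg.2 hδ.le) (star_mul_self_nonneg (δ • star u - v)) using 1
  simp only [star_sub, star_smul, star_star, star_trivial, star_mul, sub_mul, mul_sub,
    smul_mul_assoc, mul_smul_comm, smul_sub, inv_smul_smul₀ hδ.ne']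
  abel

section ConjugateDecomposition

variable {A : Type*} [NonUnitalCStarAlgebra A] [PartialOrder A] [StarOrderedRing A]

open Unitization

lemma exists_inr_eq_conjugate_of_le {x : A} {b : A⁺¹} (hx : 0 ≤ x) (hb : IsStrictlyPositive b)
    (hxb : (x : A⁺¹) ≤ b) : ∃ d : A, ‖d‖ ≤ 1 ∧ (x : A⁺¹) = d * b * star (d : A⁺¹) := by
  have hx' : 0 ≤ (x : A⁺¹) := inr_nonneg_iff.2 hx
  set s : A⁺¹ := CFC.sqrt (x : A⁺¹)
  set r : A⁺¹ := b ^ (-(1 / 2) : ℝ)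
  have hd : ((s * r).snd : A⁺¹) = s * r := by
    ext <;> simp [s, sqrt_inr]
  refine ⟨(s * r).snd, ?_, ?_⟩
  · rw [← norm_inr (𝕜 := ℂ), hd]
    exact (le_iff_norm_sqrt_mul_rpow _ _).1 hxb
  · have hs : star s = s := (IsSelfAdjoint.of_nonneg (CFC.sqrt_nonneg _)).star_eq
    have hr : star r = r := (IsSelfAdjoint.of_nonneg CFC.rpow_nonneg).star_eq
    calc (x : A⁺¹) = s * (r * b * r) * s := by
          rw [CFC.conjugate_rpow_neg_one_half b, mul_one, CFC.sqrt_mul_sqrt_self _ hx']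
      _ = (s * r).snd * b * star ((s * r).snd : A⁺¹) := by
          simp only [hd, star_mul, hs, hr, mul_assoc]

lemma exists_eq_conjugate_add_smul_of_le {x p : A} {ε : ℝ} (hx : 0 ≤ x) (hp : 0 ≤ p) (hε : 0 < ε)
    (hxp : (x : A⁺¹) ≤ p + algebraMap ℝ A⁺¹ ε) :
    ∃ d : A, ‖d‖ ≤ 1 ∧ x = d * p * star d + ε • (d * star d) := by
  have hε' : IsStrictlyPositive (algebraMap ℝ A⁺¹ ε) :=
    (hε.ne'.isUnit.map _).isStrictlyPositive (algebraMap_nonneg _ hε.le)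
  obtain ⟨d, hd, hxd⟩ :=
    exists_inr_eq_conjugate_of_le hx (hε'.nonneg_add (inr_nonneg_iff.2 hp)) hxp
  refine ⟨d, hd, inr_injective (R := ℂ) ?_⟩
  rw [hxd, Algebra.algebraMap_eq_smul_one]
  simp only [inr_add, inr_mul, inr_smul, inr_star, mul_add, add_mul, mul_smul_comm,
    smul_mul_assoc, mul_one]

lemma inr_le_inr_add_algebraMap_norm_sub {x y p : A} (hx : IsSelfAdjoint x)
    (hp : IsSelfAdjoint p) (hyp : y ≤ p) : (x : A⁺¹) ≤ p + algebraMap ℝ A⁺¹ ‖x - y‖ := by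
  have hy : IsSelfAdjoint y := by simpa using hp.sub (.of_nonneg (sub_nonneg.2 hyp))
  calc (x : A⁺¹) = y + ((x - y : A) : A⁺¹) := by rw [← inr_add, add_sub_cancel]
    _ ≤ p + algebraMap ℝ A⁺¹ ‖x - y‖ := by
        rw [← norm_inr (𝕜 := ℂ)]
        exact add_le_add ((inr_le_iff y p hy hp).2 hyp) ((hx.sub hy).inr ℂ).le_algebraMap_norm_self

lemma mem_closure_inter_Iic_of_mem_closure_lowerClosure {C : Set A} (hC : ∀ p ∈ C, 0 ≤ p)
    (hconj : ∀ p ∈ C, ∀ d : A, d * p * star d ∈ C) {x : A} (hx : 0 ≤ x)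
    (hxC : x ∈ closure (lowerClosure C : Set A)) : x ∈ closure (C ∩ Set.Iic x) := by
  refine Metric.mem_closure_iff.2 fun ε hε ↦ ?_
  obtain ⟨y, ⟨p, hpC, hyp⟩, hxy⟩ := Metric.mem_closure_iff.1 hxC (ε / 2) (half_pos hε)
  rw [dist_eq_norm] at hxy
  have hp := hC p hpC
  have hxp : (x : A⁺¹) ≤ p + algebraMap ℝ A⁺¹ (ε / 2) :=
    (inr_le_inr_add_algebraMap_norm_sub (.of_nonneg hx) (.of_nonneg hp) hyp).trans
      (add_le_add_right (algebraMap_mono _ hxy.le) _)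
  obtain ⟨d, hd, hxd⟩ := exists_eq_conjugate_add_smul_of_le hx hp (half_pos hε) hxp
  refine ⟨d * p * star d, ⟨hconj p hpC d, ?_⟩, ?_⟩
  · rw [Set.mem_Iic, hxd]
    exact le_add_of_nonneg_right (smul_nonneg (half_pos hε).le (mul_star_self_nonneg d))
  · calc dist x (d * p * star d) = ε / 2 * (‖d‖ * ‖d‖) := by
          rw [dist_eq_norm, hxd, add_sub_cancel_left, norm_smul,
            Real.norm_of_nonneg (half_pos hε).le, CStarRing.norm_self_mul_star]
      _ ≤ ε / 2 := mul_le_of_le_one_right (half_pos hε).le (mul_le_one₀ hd (norm_nonneg _) hd)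
      _ < ε := half_lt_self hε

end ConjugateDecomposition

section ConjugateCone

variable {A : Type*} [NonUnitalCStarAlgebra A] {S : Set A}

/-- The convex cone generated by the elements `b* s* s b` with `s ∈ S`. It stands in for the
positive part of the ideal generated by `S`: traces are controlled on it by their values on the
corners `s A s*`, because `b* s* s b` and `s b b* s*` have equal trace. -/
noncomputable def conjugateCone (S : Set A) : Submodule ℝ≥0 A :=
  Submodule.span ℝ≥0 {p | ∃ s ∈ S, ∃ b, p = star (s * b) * (s * b)}

lemma star_mul_self_mem_conjugateCone {s : A} (hs : s ∈ S) (b : A) :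
    star (s * b) * (s * b) ∈ conjugateCone S :=
  Submodule.subset_span ⟨s, hs, b, rfl⟩

lemma conjugate_mem_conjugateCone {p : A} (hp : p ∈ conjugateCone S) (d : A) :
    d * p * star d ∈ conjugateCone S := by
  induction hp using Submodule.span_induction with
  | mem _ h =>
    obtain ⟨s, hs, b, rfl⟩ := h
    simpa only [star_mul, star_star, mul_assoc] using
      star_mul_self_mem_conjugateCone hs (b * star d)
  | zero => simp
  | add _ _ _ _ hp hq => simpa only [mul_add, add_mul] using add_mem hp hq
  | smul c _ _ hp =>
    simpa only [mul_smul_comm, smul_mul_assoc] using (conjugateCone S).smul_mem c hp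

variable [PartialOrder A] [StarOrderedRing A]

lemma nonneg_of_mem_conjugateCone {p : A} (hp : p ∈ conjugateCone S) : 0 ≤ p := by
  induction hp using Submodule.span_induction with
  | mem _ h =>
    obtain ⟨s, -, b, rfl⟩ := h
    exact star_mul_self_nonneg _
  | zero => exact le_rfl
  | add _ _ _ _ hp hq => exact add_nonneg hp hq
  | smul c _ _ hp => exact smul_nonneg c.2 hp

lemma mul_mul_add_star_mem_closure_lowerCone {s : A} (hs : s ∈ S) (a b : A) :
    a * s * b + star (a * s * b) ∈ (lowerCone (conjugateCone S)).topologicalClosure := by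
  set j : A := a * s * b with hj
  -- The term `a a*` bounding `j + star j` lies outside the cone, but its weight `δ` is free.
  have hlim : Tendsto (fun δ : ℝ ↦ j + star j - δ • (a * star a)) (𝓝[>] 0) (𝓝 (j + star j)) :=
    tendsto_nhdsWithin_of_tendsto_nhds (Continuous.tendsto' (by fun_prop) _ _ (by simp))
  refine mem_closure_of_tendsto hlim ?_
  filter_upwards [self_mem_nhdsWithin] with δ hδ
  refine ⟨δ⁻¹ • (star (s * b) * (s * b)), ?_, ?_⟩
  · exact (conjugateCone S).smul_mem ⟨δ⁻¹, inv_nonneg.2 hδ.le⟩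
      (star_mul_self_mem_conjugateCone hs b)
  · rw [sub_le_iff_le_add', hj, mul_assoc]
    exact mul_add_star_mul_le a (s * b) hδ

lemma add_star_mem_closure_lowerCone_of_mem_span {j : A} (hj : j ∈ TwoSidedIdeal.span S) :
    j + star j ∈ (lowerCone (conjugateCone S)).topologicalClosure := by
  have hconj (a b : A) :
      a * j * b + star (a * j * b) ∈ (lowerCone (conjugateCone S)).topologicalClosure := by
    induction hj using TwoSidedIdeal.span_induction generalizing a b with
    | mem s hs => exact mul_mul_add_star_mem_closure_lowerCone hs a b
    | zero => simp
    | add x y _ _ hx hy =>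
      simpa only [mul_add, add_mul, star_add, add_add_add_comm] using add_mem (hx a b) (hy a b)
    | neg x _ hx => simpa using hx (-a) b
    | left_absorb c x _ hx => simpa only [mul_assoc] using hx (a * c) b
    | right_absorb c x _ hx => simpa only [mul_assoc] using hx a (c * b)
  have hunit := (CStarAlgebra.increasingApproximateUnit A).toIsApproximateUnit
  have hcont : Continuous fun x : A ↦ x + star x := by fun_prop
  exact (isClosed_closure.preimage hcont).closure_subset_iff.2
    (Set.range_subset_iff.2 fun u ↦ hconj u.1 u.2) (mem_closure_range_mul_mul hunit j)

lemma mem_closure_lowerCone_of_mem_closure_span {x : A} (hx : IsSelfAdjoint x)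
    (hxS : x ∈ closure (TwoSidedIdeal.span S : Set A)) :
    x ∈ (lowerCone (conjugateCone S)).topologicalClosure := by
  have hcont : Continuous fun x : A ↦ x + star x := by fun_prop
  have hdouble : x + star x ∈ (lowerCone (conjugateCone S)).topologicalClosure :=
    (isClosed_closure.preimage hcont).closure_subset_iff.2
      (fun _ ↦ add_star_mem_closure_lowerCone_of_mem_span) hxS
  rw [hx.star_eq, ← two_smul ℝ≥0 x] at hdouble
  simpa using Submodule.smul_mem _ (2⁻¹ : ℝ≥0) hdouble

lemma mem_closure_conjugateCone_inter_Iic {x : A} (hx : 0 ≤ x)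
    (hxS : x ∈ closure (TwoSidedIdeal.span S : Set A)) :
    x ∈ closure ((conjugateCone S : Set A) ∩ Set.Iic x) :=
  mem_closure_inter_Iic_of_mem_closure_lowerClosure (fun _ ↦ nonneg_of_mem_conjugateCone)
    (fun _ ↦ conjugate_mem_conjugateCone) hx
    (mem_closure_lowerCone_of_mem_closure_span (.of_nonneg hx) hxS)

end ConjugateCone

section Trace

variable {A : Type*} [NonUnitalCStarAlgebra A] [PartialOrder A] [StarOrderedRing A]
  {φ φ' : A → ℝ≥0∞} {S : Set A}

lemma IsTrace.map_zero_s4 (hφ : IsTrace φ) : φ 0 = 0 := by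
  simpa using hφ.smul 0 le_rfl 0

lemma IsTrace.mono_s4 (hφ : IsTrace φ) {x y : A} (hx : 0 ≤ x) (hxy : x ≤ y) : φ x ≤ φ y := by
  rw [← add_sub_cancel x y, hφ.add _ _ hx (sub_nonneg.2 hxy)]
  exact le_self_add

lemma IsTrace.le_of_mem_conjugateCone (hφ : IsTrace φ) (hφ' : IsTrace φ')
    (hle : ∀ s ∈ S, ∀ x : A, 0 ≤ x → (∃ a : A, x = s * a * star s) → φ x ≤ φ' x)
    {p : A} (hp : p ∈ conjugateCone S) : φ p ≤ φ' p := by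
  induction hp using Submodule.span_induction with
  | mem _ h =>
    obtain ⟨s, hs, b, rfl⟩ := h
    rw [hφ.tracial, hφ'.tracial]
    exact hle s hs _ (mul_star_self_nonneg _) ⟨b * star b, by simp only [star_mul, mul_assoc]⟩
  | zero => rw [hφ.map_zero_s4, hφ'.map_zero_s4]
  | add p q hp hq hpφ hqφ =>
    have hp := nonneg_of_mem_conjugateCone hp
    have hq := nonneg_of_mem_conjugateCone hq
    rw [hφ.add p q hp hq, hφ'.add p q hp hq]
    exact add_le_add hpφ hqφ
  | smul c p hp hpφ =>
    have hp := nonneg_of_mem_conjugateCone hp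
    rw [NNReal.smul_def, hφ.smul p hp c, hφ'.smul p hp c]
    gcongr

lemma IsLSC.le_of_mem_closure (hφ : IsLSC φ) {T : Set A} {c : ℝ≥0∞}
    (hT : ∀ y ∈ T, 0 ≤ y ∧ φ y ≤ c) {x : A} (hx : x ∈ closure T) : φ x ≤ c := by
  induction c with
  | top => exact le_top
  | coe α => exact (closure_minimal hT (hφ α) hx).2

theorem IsTrace.le_on_ideal_of_le_on_corners (hφ : IsTrace φ) (hφl : IsLSC φ) (hφ' : IsTrace φ')
    (hle : ∀ s ∈ S, ∀ x : A, 0 ≤ x → (∃ a : A, x = s * a * star s) → φ x ≤ φ' x)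
    {x : A} (hx : 0 ≤ x) (hxS : x ∈ closure (TwoSidedIdeal.span S : Set A)) : φ x ≤ φ' x := by
  refine hφl.le_of_mem_closure ?_ (mem_closure_conjugateCone_inter_Iic hx hxS)
  rintro y ⟨hyC, hyx⟩
  have hy := nonneg_of_mem_conjugateCone hyC
  exact ⟨hy, (hφ.le_of_mem_conjugateCone hφ' hle hyC).trans (hφ'.mono_s4 hy hyx)⟩

theorem traces_eq_on_ideal_of_eq_on_corner_general (hφ : IsTrace φ) (hφl : IsLSC φ)
    (hφ' : IsTrace φ') (hφ'l : IsLSC φ')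
    (heq : ∀ s ∈ S, ∀ x : A, 0 ≤ x → (∃ a : A, x = s * a * star s) → φ x = φ' x)
    {x : A} (hx : 0 ≤ x) (hxS : x ∈ closure (TwoSidedIdeal.span S : Set A)) : φ x = φ' x :=
  le_antisymm
    (hφ.le_on_ideal_of_le_on_corners hφl hφ' (fun s hs y hy hys ↦ (heq s hs y hy hys).le) hx hxS)
    (hφ'.le_on_ideal_of_le_on_corners hφ'l hφ (fun s hs y hy hys ↦ (heq s hs y hy hys).ge) hx hxS)

end Trace

/-- Let `φ` and `φ'` be two lower semicontinuous traces on a C*-algebra `A` and `e` a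
projection in `A`. If both are finite on `(eAe)₊` and agree there, then they agree on the
positive part of the closed two-sided ideal `AeA` generated by `e`. -/
theorem traces_eq_on_ideal_of_eq_on_corner {A : Type*} [NonUnitalCStarAlgebra A]
    [PartialOrder A] [StarOrderedRing A]
    (φ φ' : A → ℝ≥0∞) (hφ : IsTrace φ) (hφl : IsLSC φ) (hφ' : IsTrace φ') (hφ'l : IsLSC φ')
    (e : A) (he₁ : IsSelfAdjoint e) (he₂ : e * e = e)
    (hfin : ∀ x : A, 0 ≤ x → (∃ a : A, x = e * a * e) → φ x < ∞ ∧ φ' x < ∞)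
    (heq : ∀ x : A, 0 ≤ x → (∃ a : A, x = e * a * e) → φ x = φ' x)
    (x : A) (hx : 0 ≤ x) (hxI : x ∈ closure (TwoSidedIdeal.span {e} : Set A)) :
    φ x = φ' x :=
  traces_eq_on_ideal_of_eq_on_corner_general (S := {e}) hφ hφl hφ' hφ'l
    (by simpa [he₁.star_eq] using heq) hx hxI
end

section
/- Let φ and φ' be two lower semicontinuous traces on a C*-algebra A and let e be a projection in A. Suppose that both φ and φ' take finite values on (eAe)₊ and that φ(x) = φ'(x) for all x ∈ (eAe)₊. Then for any a, b ∈ A such that the element x = a e b is positive, one has φ(x) = φ'(x). -/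
open scoped ENNReal NNReal

/-!
Positivity of `star a * b` makes it self-adjoint, so polarization expresses `4 • (star a * b)` as
the difference of the squares `star (a + b) * (a + b)` and `star (a - b) * (a - b)`. A trace moves
these squares to `(a ± b) * star (a ± b)`, which for `a, b ∈ c A` lie in `c A (star c)`. There the
two traces agree, and finiteness permits cancelling the subtracted square. A projection `e` is the
case `c = e`, since `a * e * b = star (e * star a) * (e * b)`.
-/

lemma four_nsmul_star_mul_add_star_sub_mul_sub {R : Type*} [NonUnitalNonAssocRing R] [StarRing R]
    {a b : R} (h : IsSelfAdjoint (star a * b)) :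
    4 • (star a * b) + star (a - b) * (a - b) = star (a + b) * (a + b) := by
  have hcomm : star b * a = star a * b := by simpa using h.star_eq
  simp only [star_add, star_sub, mul_add, add_mul, mul_sub, sub_mul, hcomm]
  abel

section Trace

variable {A : Type*} [NonUnitalCStarAlgebra A] [PartialOrder A] [StarOrderedRing A]
  {φ φ' : A → ℝ≥0∞}

namespace IsTrace

lemma map_nsmul (hφ : IsTrace φ) {x : A} (hx : 0 ≤ x) (n : ℕ) : φ (n • x) = n * φ x := by
  simpa [Nat.cast_smul_eq_nsmul] using hφ.smul x hx n

lemma four_mul_map_star_mul_add (hφ : IsTrace φ) {a b : A} (hab : 0 ≤ star a * b) :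
    4 * φ (star a * b) + φ ((a - b) * star (a - b)) = φ ((a + b) * star (a + b)) := by
  calc 4 * φ (star a * b) + φ ((a - b) * star (a - b))
      = φ (4 • (star a * b)) + φ (star (a - b) * (a - b)) := by
        rw [hφ.map_nsmul hab, hφ.tracial, Nat.cast_ofNat]
    _ = φ (4 • (star a * b) + star (a - b) * (a - b)) :=
        (hφ.add _ _ (nsmul_nonneg hab 4) (star_mul_self_nonneg _)).symm
    _ = φ (star (a + b) * (a + b)) := by
        rw [four_nsmul_star_mul_add_star_sub_mul_sub (.of_nonneg hab)]
    _ = φ ((a + b) * star (a + b)) := hφ.tracial _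

lemma map_star_mul_eq_of_map_mul_star_eq (hφ : IsTrace φ) (hφ' : IsTrace φ') {a b : A}
    (hab : 0 ≤ star a * b)
    (hadd : φ ((a + b) * star (a + b)) = φ' ((a + b) * star (a + b)))
    (hsub : φ ((a - b) * star (a - b)) = φ' ((a - b) * star (a - b)))
    (hfin : φ ((a - b) * star (a - b)) ≠ ∞) :
    φ (star a * b) = φ' (star a * b) := by
  have h : 4 * φ (star a * b) + φ ((a - b) * star (a - b)) =
      4 * φ' (star a * b) + φ ((a - b) * star (a - b)) := by
    rw [hφ.four_mul_map_star_mul_add hab, hadd, hsub, hφ'.four_mul_map_star_mul_add hab]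
  rw [ENNReal.add_left_inj hfin] at h
  exact (ENNReal.mul_right_inj four_ne_zero ENNReal.ofNat_ne_top).mp h

end IsTrace

theorem traces_eq_on_aeb_of_eq_on_corner_general (hφ : IsTrace φ) (hφ' : IsTrace φ') (c : A)
    (hfin : ∀ x : A, 0 ≤ x → (∃ a : A, x = c * a * star c) → φ x < ∞)
    (heq : ∀ x : A, 0 ≤ x → (∃ a : A, x = c * a * star c) → φ x = φ' x)
    (a b : A) (hpos : 0 ≤ a * (star c * c) * b) :
    φ (a * (star c * c) * b) = φ' (a * (star c * c) * b) := by
  have hcorner (w : A) : ∃ y : A, c * w * star (c * w) = c * y * star c :=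
    ⟨w * star w, by simp only [star_mul, mul_assoc]⟩
  have hfactor : a * (star c * c) * b = star (c * star a) * (c * b) := by
    simp only [star_mul, star_star, mul_assoc]
  rw [hfactor] at hpos ⊢
  apply hφ.map_star_mul_eq_of_map_mul_star_eq hφ' hpos
  · rw [← mul_add]
    exact heq _ (mul_star_self_nonneg _) (hcorner _)
  · rw [← mul_sub]
    exact heq _ (mul_star_self_nonneg _) (hcorner _)
  · rw [← mul_sub]
    exact (hfin _ (mul_star_self_nonneg _) (hcorner _)).ne

end Trace

/-- Let `φ` and `φ'` be two lower semicontinuous traces on a C*-algebra `A` and `e` a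
projection in `A`. If both are finite on `(eAe)₊` and agree there, then for any `a, b ∈ A`
such that `a * e * b` is positive, `φ (a * e * b) = φ' (a * e * b)`. -/
theorem traces_eq_on_aeb_of_eq_on_corner {A : Type*} [NonUnitalCStarAlgebra A]
    [PartialOrder A] [StarOrderedRing A]
    (φ φ' : A → ℝ≥0∞) (hφ : IsTrace φ) (hφl : IsLSC φ) (hφ' : IsTrace φ') (hφ'l : IsLSC φ')
    (e : A) (he₁ : IsSelfAdjoint e) (he₂ : e * e = e)
    (hfin : ∀ x : A, 0 ≤ x → (∃ a : A, x = e * a * e) → φ x < ∞ ∧ φ' x < ∞)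
    (heq : ∀ x : A, 0 ≤ x → (∃ a : A, x = e * a * e) → φ x = φ' x)
    (a b : A) (hpos : 0 ≤ a * e * b) :
    φ (a * e * b) = φ' (a * e * b) := by
  have hstar : star e * e = e := by rw [he₁.star_eq, he₂]
  simpa only [hstar] using traces_eq_on_aeb_of_eq_on_corner_general hφ hφ' e
    (fun x hx hc ↦ (hfin x hx (by rwa [he₁.star_eq] at hc)).1)
    (fun x hx hc ↦ heq x hx (by rwa [he₁.star_eq] at hc)) a b (by rwa [hstar])
end
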